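/- Let A be a d×d invertible matrix with integer entries, inducing the epimorphism T_A on 𝕋^d = ℝ^d/ℤ^d. Then the closure of the set {x ∈ 𝕋^d : (T_A)^n x = 0 for some n ≥ 0} is a proper subset of 𝕋^d if and only if A has an eigenvalue λ ∈ ℂ which is an integral algebraic unit, i.e., both λ and 1/λ are algebraic integers. -/

import Mathlib

/-- The endomorphism of the torus `𝕋^d = (ℝ/ℤ)^d` induced by an integer matrix `A`. -/
noncomputable def torusEndo {d : ℕ} (A : Matrix (Fin d) (Fin d) ℤ) :
    (Fin d → AddCircle (1 : ℝ)) → (Fin d → AddCircle (1 : ℝ)) :=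
  fun x i => ∑ j, A i j • x j

/-!
Write `H` for the group of points annihilated by some power of `T_A`. If a closed subgroup of the
torus is killed by no nontrivial character, its Haar measure has the same Fourier coefficients as
that of the torus, so it is the whole torus; hence `H` fails to be dense iff some frequency `k ≠ 0`
kills `H`. By duality between `ℤ^d` and the torus, `k` kills `ker T_A^n` iff `k` lies in the range
of `(Aᵀ)^n`, so the frequencies killing `H` form `⋂ₙ (Aᵀ)^n ℤ^d`. Letting `X` act by `Aᵀ` makes
`ℤ^d` a finite `ℤ[X]`-module, and Krull's intersection theorem for the ideal `(X)` says that `k`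
lies in this intersection iff `p(Aᵀ) k = 0` for some `p ∈ ℤ[X]` with `p(0) = 1`. A nonzero such `k`
exists for a given `p` iff `det p(Aᵀ) = 0`, that is, iff `p` vanishes at an eigenvalue `λ` of `A`;
reversing the coefficients of `p` turns this into a monic equation for `λ⁻¹`.
-/

open MeasureTheory Polynomial
open scoped Matrix

section KrullIntersection

variable {R M : Type*} [CommRing R] [AddCommGroup M] [Module R M]

open Module in
theorem mem_iInf_range_pow_iff_exists_aeval_eq_zero [IsNoetherianRing R] [Module.Finite R M]
    (f : End R M) (v : M) :
    v ∈ ⨅ n : ℕ, LinearMap.range (f ^ n) ↔ ∃ p : R[X], p.coeff 0 = 1 ∧ aeval f p v = 0 := by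
  have mem_smul_top_iff (n : ℕ) : AEval'.of f v ∈ (Ideal.span {(X : R[X])}) ^ n •
      (⊤ : Submodule R[X] (AEval' f)) ↔ v ∈ LinearMap.range (f ^ n) := by
    simp only [Ideal.span_singleton_pow, Submodule.ideal_span_singleton_smul,
      Submodule.mem_smul_pointwise_iff_exists, Submodule.mem_top, true_and, LinearMap.mem_range]
    rw [(AEval'.of f).surjective.exists]
    simp only [AEval'.X_pow_smul_of, (AEval'.of f).injective.eq_iff]
    simp [Module.End.smul_def]
  have krull := Ideal.mem_iInf_smul_pow_eq_bot_iff (Ideal.span {(X : R[X])}) (AEval'.of f v)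
  simp only [Submodule.mem_iInf, mem_smul_top_iff] at krull ⊢
  rw [krull, Subtype.exists]
  simp only [Ideal.mem_span_singleton, X_dvd_iff]
  have smul_of (r : R[X]) : r • AEval'.of f v = AEval'.of f (aeval f r v) := rfl
  simp only [smul_of, (AEval'.of f).injective.eq_iff, exists_prop]
  refine (Equiv.subLeft (1 : R[X])).exists_congr fun r => ?_
  simp [sub_eq_zero, eq_comm (a := v)]

end KrullIntersection

section Eigenvalues

open Matrix

variable {n R K : Type*} [Fintype n] [DecidableEq n] [CommRing R] [Field K]

theorem det_aeval_eq_zero_iff_of_isAlgClosed [IsAlgClosed K] (B : Matrix n n K) (p : K[X]) :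
    (aeval B p).det = 0 ↔ ∃ μ : K, B.charpoly.IsRoot μ ∧ p.IsRoot μ := by
  cases isEmpty_or_nonempty n
  · simp
  have spectrum_nonempty : (spectrum K B).Nonempty :=
    spectrum.nonempty_of_isAlgClosed_of_finiteDimensional K B
  rw [← not_iff_not, ← ne_eq, ← isUnit_iff_ne_zero, ← isUnit_iff_isUnit_det,
    ← spectrum.zero_notMem_iff K, spectrum.map_polynomial_aeval_of_nonempty B p spectrum_nonempty]
  simp [mem_spectrum_iff_isRoot_charpoly]

theorem det_aeval_eq_zero_iff [IsAlgClosed K] [Algebra R K] [FaithfulSMul R K]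
    (B : Matrix n n R) (p : R[X]) :
    (aeval B p).det = 0 ↔
      ∃ μ : K, (B.map (algebraMap R K)).charpoly.IsRoot μ ∧ aeval μ p = 0 := by
  have map_aeval : (aeval B p).map (algebraMap R K) =
      aeval (B.map (algebraMap R K)) (p.map (algebraMap R K)) := by
    rw [aeval_map_algebraMap]
    exact (aeval_algHom_apply (Algebra.ofId R K).mapMatrix B p).symm
  rw [← map_eq_zero_iff _ (FaithfulSMul.algebraMap_injective R K), RingHom.map_det,
    RingHom.mapMatrix_apply, map_aeval, det_aeval_eq_zero_iff_of_isAlgClosed]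
  simp only [IsRoot.def, eval_map_algebraMap]

theorem exists_coeff_zero_eq_one_and_aeval_eq_zero_iff [Algebra R K] {x : K} :
    (∃ p : R[X], p.coeff 0 = 1 ∧ aeval x p = 0) ↔ x ≠ 0 ∧ IsIntegral R x⁻¹ := by
  constructor
  · rintro ⟨p, hp, hpx⟩
    have hx : x ≠ 0 := by
      rintro rfl
      simp [← coeff_zero_eq_aeval_zero', hp] at hpx
    have := invertibleOfNonzero hx
    have := (algebraMap R K).domain_nontrivial
    refine ⟨hx, p.reverse, ?_, ?_⟩
    · rw [Monic, reverse_leadingCoeff, trailingCoeff_eq_coeff_zero, hp]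
      simp [hp]
    · rw [← invOf_eq_inv]
      exact (eval₂_reverse_eq_zero_iff _ x p).2 hpx
  · rintro ⟨hx, q, hq, hqx⟩
    have := invertibleOfNonzero (inv_ne_zero hx)
    have h := (eval₂_reverse_eq_zero_iff _ x⁻¹ q).2 hqx
    rw [invOf_eq_inv, inv_inv] at h
    exact ⟨q.reverse, by rw [coeff_zero_reverse, hq], h⟩

theorem isIntegral_of_isRoot_charpoly_map {S : Type*} [CommRing S] [Algebra R S]
    {B : Matrix n n R} {μ : S} (hμ : (B.map (algebraMap R S)).charpoly.IsRoot μ) :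
    IsIntegral R μ := by
  rw [charpoly_map, IsRoot.def, eval_map] at hμ
  exact ⟨B.charpoly, B.charpoly_monic, hμ⟩

theorem ne_zero_of_isRoot_charpoly_map {S : Type*} [CommRing S] [Algebra R S] [FaithfulSMul R S]
    {B : Matrix n n R} (hB : B.det ≠ 0) {μ : S}
    (hμ : (B.map (algebraMap R S)).charpoly.IsRoot μ) : μ ≠ 0 := by
  rintro rfl
  rw [charpoly_map, IsRoot.def, ← coeff_zero_eq_eval_zero, coeff_map,
    map_eq_zero_iff _ (FaithfulSMul.algebraMap_injective R S)] at hμ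
  exact hB (by rw [det_eq_sign_charpoly_coeff, hμ, mul_zero])

theorem exists_ne_zero_mem_iInf_range_pow_iff [IsNoetherianRing R] [IsAlgClosed K] [Algebra R K]
    [FaithfulSMul R K] (B : Matrix n n R) :
    (∃ v ≠ 0, v ∈ ⨅ m : ℕ, (B.toLin' ^ m).range) ↔
      ∃ μ : K, μ ≠ 0 ∧ (B.map (algebraMap R K)).charpoly.IsRoot μ ∧ IsIntegral R μ⁻¹ := by
  have : IsDomain R := (FaithfulSMul.algebraMap_injective R K).isDomain (algebraMap R K)
  have aeval_toLin' (p : R[X]) (v : n → R) : aeval B.toLin' p v = aeval B p *ᵥ v :=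
    LinearMap.congr_fun (aeval_algHom_apply toLinAlgEquiv' B p) v
  calc (∃ v ≠ 0, v ∈ ⨅ m : ℕ, (B.toLin' ^ m).range)
    _ ↔ ∃ p : R[X], p.coeff 0 = 1 ∧ ∃ v ≠ 0, aeval B p *ᵥ v = 0 := by
      simp only [mem_iInf_range_pow_iff_exists_aeval_eq_zero, aeval_toLin']
      tauto
    _ ↔ ∃ p : R[X], p.coeff 0 = 1 ∧
        ∃ μ : K, (B.map (algebraMap R K)).charpoly.IsRoot μ ∧ aeval μ p = 0 := by
      simp only [exists_mulVec_eq_zero_iff, det_aeval_eq_zero_iff (K := K)]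
    _ ↔ ∃ μ : K, (B.map (algebraMap R K)).charpoly.IsRoot μ ∧
        ∃ p : R[X], p.coeff 0 = 1 ∧ aeval μ p = 0 := by
      tauto
    _ ↔ _ := by
      simp only [exists_coeff_zero_eq_one_and_aeval_eq_zero_iff, and_left_comm]

end Eigenvalues

section Duality

theorem exists_addMonoidHom_unitAddCircle_apply_ne_zero {G : Type*} [AddCommGroup G] {g : G}
    (hg : g ≠ 0) : ∃ φ : G →+ UnitAddCircle, φ g ≠ 0 := by
  obtain ⟨c, hc⟩ := CharacterModule.exists_character_apply_ne_zero_of_ne_zero hg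
  let castHom : AddCircle (1 : ℚ) →+ UnitAddCircle :=
    QuotientAddGroup.map _ _ (Rat.castHom ℝ).toAddMonoidHom <| by
      simp [AddSubgroup.zmultiples_le]
  have castHom_injective : Function.Injective castHom := by
    refine (injective_iff_map_eq_zero castHom).2 fun q hq => ?_
    induction q using QuotientAddGroup.induction_on with | H q =>
    obtain ⟨n, hn⟩ := (AddCircle.coe_eq_zero_iff (1 : ℝ)).1 hq
    refine (AddCircle.coe_eq_zero_iff (1 : ℚ)).2 ⟨n, ?_⟩
    simp only [zsmul_eq_mul, mul_one] at hn ⊢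
    change (n : ℝ) = (q : ℝ) at hn
    exact_mod_cast hn
  exact ⟨castHom.comp c, fun h => hc (castHom_injective (h.trans castHom.map_zero.symm))⟩

variable {ι : Type*} [Fintype ι]

/-- The character of the torus with frequency `k`, written additively. -/
def torusCharacter (k : ι → ℤ) : UnitAddTorus ι →+ UnitAddCircle :=
  ∑ i, k i • Pi.evalAddMonoidHom _ i

theorem torusCharacter_apply (k : ι → ℤ) (x : UnitAddTorus ι) :
    torusCharacter k x = ∑ i, k i • x i := by
  simp [torusCharacter]

theorem continuous_torusCharacter (k : ι → ℤ) : Continuous (torusCharacter k) := by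
  simp only [funext (torusCharacter_apply k)]
  fun_prop

theorem torusCharacter_map_single [DecidableEq ι] (φ : (ι → ℤ) →+ UnitAddCircle) (k : ι → ℤ) :
    torusCharacter k (fun i => φ (Pi.single i 1)) = φ k := by
  simp only [torusCharacter_apply, ← map_zsmul, ← map_sum]
  exact congrArg φ (pi_eq_sum_univ' k).symm

theorem mem_of_forall_torusCharacter_eq_zero {L : AddSubgroup (ι → ℤ)} {k : ι → ℤ}
    (h : ∀ x, (∀ l ∈ L, torusCharacter l x = 0) → torusCharacter k x = 0) : k ∈ L := by
  classical
  by_contra hk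
  obtain ⟨φ, hφ⟩ := exists_addMonoidHom_unitAddCircle_apply_ne_zero
    (mt (QuotientAddGroup.eq_zero_iff k).1 hk)
  let ψ : (ι → ℤ) →+ UnitAddCircle := φ.comp (QuotientAddGroup.mk' L)
  have ψ_eq_zero {l : ι → ℤ} (hl : l ∈ L) : ψ l = 0 := by
    rw [AddMonoidHom.comp_apply, QuotientAddGroup.mk'_apply, (QuotientAddGroup.eq_zero_iff l).2 hl,
      map_zero]
  refine hφ (?_ : ψ k = 0)
  rw [← torusCharacter_map_single]
  exact h _ fun l hl => by rw [torusCharacter_map_single, ψ_eq_zero hl]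

theorem torusCharacter_eq_zero_iff {k : ι → ℤ} : torusCharacter k = 0 ↔ k = 0 := by
  refine ⟨fun h => ?_, ?_⟩
  · have : k ∈ (⊥ : AddSubgroup (ι → ℤ)) :=
      mem_of_forall_torusCharacter_eq_zero fun x _ => by rw [h, AddMonoidHom.zero_apply]
    exact this
  · rintro rfl
    simp [torusCharacter]

theorem eq_zero_of_forall_torusCharacter_eq_zero {x : UnitAddTorus ι}
    (h : ∀ k, torusCharacter k x = 0) : x = 0 := by
  classical
  funext i
  simpa [torusCharacter_apply, Pi.single_apply] using h (Pi.single i 1)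

end Duality

section Density

variable {ι : Type*} [Fintype ι]

theorem mFourier_eq_toCircle (k : ι → ℤ) (x : UnitAddTorus ι) :
    UnitAddTorus.mFourier k x = AddCircle.toCircle (torusCharacter k x) := by
  have toCircle_sum : AddCircle.toCircle (∑ i, k i • x i) = ∏ i, AddCircle.toCircle (k i • x i) :=
    map_sum AddCircle.toCircle_addChar.toAddMonoidHom (fun i => k i • x i) Finset.univ
  calc UnitAddTorus.mFourier k x
    _ = ∏ i, (AddCircle.toCircle (k i • x i) : ℂ) := by
      simp only [UnitAddTorus.mFourier, ContinuousMap.coe_mk, fourier_apply]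
    _ = (∏ i, AddCircle.toCircle (k i • x i) : Circle) := (map_prod Circle.coeHom _ _).symm
    _ = AddCircle.toCircle (torusCharacter k x) := by rw [torusCharacter_apply, toCircle_sum]

theorem integral_eq_zero_of_add_left_eq_mul {G 𝕜 : Type*} [AddGroup G] [MeasurableSpace G]
    [MeasurableAdd G] [RCLike 𝕜] {μ : Measure G} [μ.IsAddLeftInvariant] {f : G → 𝕜} {a : G} {c : 𝕜}
    (hc : c ≠ 1) (hf : ∀ x, f (a + x) = c * f x) : ∫ x, f x ∂μ = 0 := by
  have h : ∫ x, f x ∂μ = c * ∫ x, f x ∂μ := by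
    rw [← integral_const_mul, ← integral_add_left_eq_self f a]
    simp only [hf]
  by_contra h_ne
  exact hc ((right_eq_mul₀ h_ne).1 h)

open BoundedContinuousFunction in
theorem measure_eq_of_integral_mFourier_eq {μ ν : Measure (UnitAddTorus ι)} [IsFiniteMeasure μ]
    [IsFiniteMeasure ν]
    (h : ∀ k, ∫ x, UnitAddTorus.mFourier k x ∂μ = ∫ x, UnitAddTorus.mFourier k x ∂ν) : μ = ν := by
  let A : StarSubalgebra ℂ (UnitAddTorus ι →ᵇ ℂ) :=
    (UnitAddTorus.mFourierSubalgebra ι).comap (toContinuousMapStarₐ ℂ)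
  refine ext_of_forall_mem_subalgebra_integral_eq_of_pseudoEMetric_complete_countable (A := A)
    ?_ ?_
  · intro x y hxy
    obtain ⟨_, ⟨f, hf, rfl⟩, hfxy⟩ := UnitAddTorus.mFourierSubalgebra_separatesPoints hxy
    exact ⟨_, ⟨f, ⟨mkOfCompact f, hf, rfl⟩, rfl⟩, hfxy⟩
  · intro g hg
    have integrable (ρ : Measure (UnitAddTorus ι)) [IsFiniteMeasure ρ]
        (f : C(UnitAddTorus ι, ℂ)) : Integrable f ρ :=
      (mkOfCompact f).integrable ρ
    have hg' : g.toContinuousMap ∈ Submodule.span ℂ (Set.range UnitAddTorus.mFourier) := by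
      rw [← UnitAddTorus.mFourierSubalgebra_coe]
      exact hg
    change ∫ x, g.toContinuousMap x ∂μ = ∫ x, g.toContinuousMap x ∂ν
    generalize g.toContinuousMap = f at hg' ⊢
    induction hg' using Submodule.span_induction with
    | mem f hf => obtain ⟨k, rfl⟩ := hf; exact h k
    | zero => simp
    | add f₁ f₂ _ _ h₁ h₂ =>
      simp only [ContinuousMap.add_apply]
      rw [integral_add (integrable μ f₁) (integrable μ f₂),
        integral_add (integrable ν f₁) (integrable ν f₂), h₁, h₂]
    | smul c f _ hf =>
      simp only [ContinuousMap.smul_apply, integral_smul, hf]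

theorem integral_mFourier_comp_eq_zero {G : Type*} [AddGroup G] [MeasurableSpace G]
    [MeasurableAdd G] {μ : Measure G} [μ.IsAddLeftInvariant] (φ : G →+ UnitAddTorus ι)
    {k : ι → ℤ} (hk : (torusCharacter k).comp φ ≠ 0) :
    ∫ g, UnitAddTorus.mFourier k (φ g) ∂μ = 0 := by
  obtain ⟨a, ha⟩ := DFunLike.ne_iff.1 hk
  have hc : UnitAddTorus.mFourier k (φ a) ≠ 1 := by
    rw [mFourier_eq_toCircle, ne_eq, Circle.coe_eq_one, ← AddCircle.toCircle_zero]
    exact (AddCircle.injective_toCircle one_ne_zero).ne ha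
  refine integral_eq_zero_of_add_left_eq_mul (a := a) hc fun x => ?_
  simp only [mFourier_eq_toCircle, map_add, AddCircle.toCircle_add, Circle.coe_mul]

theorem eq_top_of_isClosed_of_forall_torusCharacter {K : AddSubgroup (UnitAddTorus ι)}
    (hK : IsClosed (K : Set (UnitAddTorus ι)))
    (h : ∀ k, (∀ x ∈ K, torusCharacter k x = 0) → k = 0) : K = ⊤ := by
  have : CompactSpace K := isCompact_iff_compactSpace.1 hK.isCompact
  let μ : Measure K := Measure.addHaarMeasure ⊤
  let ν : Measure (UnitAddTorus ι) := Measure.addHaarMeasure ⊤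
  have : IsProbabilityMeasure μ := ⟨Measure.addHaarMeasure_self (K₀ := ⊤)⟩
  have : IsProbabilityMeasure ν := ⟨Measure.addHaarMeasure_self (K₀ := ⊤)⟩
  have haar_eq : μ.map Subtype.val = ν := by
    refine measure_eq_of_integral_mFourier_eq fun k => ?_
    rw [integral_map (by fun_prop) (by fun_prop)]
    by_cases hk : k = 0
    · simp [hk, UnitAddTorus.mFourier_zero]
    · have on_subgroup : (torusCharacter k).comp K.subtype ≠ 0 := fun h0 =>
        hk (h k fun x hx => DFunLike.congr_fun h0 ⟨x, hx⟩)
      have on_torus : (torusCharacter k).comp (AddMonoidHom.id _) ≠ 0 :=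
        mt torusCharacter_eq_zero_iff.1 hk
      exact (integral_mFourier_comp_eq_zero K.subtype on_subgroup).trans
        (integral_mFourier_comp_eq_zero (AddMonoidHom.id _) on_torus).symm
  have hnull : ν (K : Set (UnitAddTorus ι))ᶜ = 0 := by
    rw [← haar_eq, Measure.map_apply (by fun_prop) hK.measurableSet.compl, Set.preimage_compl,
      Subtype.coe_preimage_self, Set.compl_univ, measure_empty]
  rw [hK.isOpen_compl.measure_eq_zero_iff ν, Set.compl_empty_iff] at hnull
  exact SetLike.coe_injective hnull

theorem dense_iff_forall_torusCharacter {H : AddSubgroup (UnitAddTorus ι)} :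
    Dense (H : Set (UnitAddTorus ι)) ↔ ∀ k, (∀ x ∈ H, torusCharacter k x = 0) → k = 0 := by
  constructor
  · intro hH k hk
    refine torusCharacter_eq_zero_iff.1 <| DFunLike.coe_injective ?_
    exact (continuous_torusCharacter k).ext_on hH continuous_zero hk
  · intro h
    rw [dense_iff_closure_eq, ← H.topologicalClosure_coe,
      eq_top_of_isClosed_of_forall_torusCharacter H.isClosed_topologicalClosure fun k hk =>
        h k fun x hx => hk x (H.le_topologicalClosure hx), AddSubgroup.coe_top]

end Density

section PreTorsion

/-- The subgroup of the elements annihilated by some iterate of an endomorphism. -/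
def preTorsion {G : Type*} [AddGroup G] (f : AddMonoid.End G) : AddSubgroup G where
  carrier := {x | ∃ n, f^[n] x = 0}
  zero_mem' := ⟨0, rfl⟩
  add_mem' := by
    rintro x y ⟨m, hm⟩ ⟨n, hn⟩
    refine ⟨m + n, ?_⟩
    rw [iterate_map_add, Function.iterate_add_apply f m n y, hn, add_comm m n,
      Function.iterate_add_apply f n m x, hm, iterate_map_zero, iterate_map_zero, add_zero]
  neg_mem' := by
    rintro x ⟨n, hn⟩
    exact ⟨n, by rw [iterate_map_neg, hn, neg_zero]⟩

variable {d : ℕ} (A : Matrix (Fin d) (Fin d) ℤ)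

theorem torusCharacter_torusEndo (k : Fin d → ℤ) (x : UnitAddTorus (Fin d)) :
    torusCharacter k (torusEndo A x) = torusCharacter (Aᵀ.toLin' k) x := by
  simp only [torusCharacter_apply, torusEndo, Matrix.toLin'_apply, Matrix.mulVec_transpose,
    Matrix.vecMul, dotProduct, Finset.smul_sum, Finset.sum_smul, mul_smul]
  exact Finset.sum_comm

theorem torusCharacter_iterate_torusEndo (n : ℕ) (k : Fin d → ℤ) (x : UnitAddTorus (Fin d)) :
    torusCharacter k ((torusEndo A)^[n] x) = torusCharacter ((Aᵀ.toLin' ^ n) k) x := by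
  induction n generalizing k with
  | zero => rfl
  | succ n ih => rw [Function.iterate_succ_apply', torusCharacter_torusEndo, ih, pow_succ]; rfl

theorem iterate_torusEndo_eq_zero_iff {n : ℕ} {x : UnitAddTorus (Fin d)} :
    (torusEndo A)^[n] x = 0 ↔
      ∀ l ∈ (Aᵀ.toLin' ^ n).range, torusCharacter l x = 0 := by
  simp only [LinearMap.mem_range, forall_exists_index, forall_apply_eq_imp_iff,
    ← torusCharacter_iterate_torusEndo]
  exact ⟨fun h k => by rw [h, map_zero], eq_zero_of_forall_torusCharacter_eq_zero⟩

/-- The map `torusEndo A` bundled as an endomorphism of the group `𝕋^d`. -/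
noncomputable def torusEndoHom : AddMonoid.End (UnitAddTorus (Fin d)) :=
  AddMonoidHom.mk' (torusEndo A) fun x y => by
    ext i
    simp only [torusEndo, Pi.add_apply, smul_add, Finset.sum_add_distrib]

theorem forall_mem_preTorsion_torusCharacter_eq_zero_iff (k : Fin d → ℤ) :
    (∀ x ∈ preTorsion (torusEndoHom A), torusCharacter k x = 0) ↔
      k ∈ ⨅ n : ℕ, (Aᵀ.toLin' ^ n).range := by
  rw [Submodule.mem_iInf]
  constructor
  · intro h n
    exact mem_of_forall_torusCharacter_eq_zero (L := (Aᵀ.toLin' ^ n).range.toAddSubgroup)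
      fun x hx => h x ⟨n, (iterate_torusEndo_eq_zero_iff A).2 hx⟩
  · rintro h x ⟨n, hn⟩
    exact (iterate_torusEndo_eq_zero_iff A).1 hn k (h n)

end PreTorsion

theorem closure_preTorsion_ne_univ_iff_general {d : ℕ} (A : Matrix (Fin d) (Fin d) ℤ) :
    closure {x : Fin d → AddCircle (1 : ℝ) | ∃ n : ℕ, (torusEndo A)^[n] x = 0} ≠ Set.univ ↔
      ∃ lam : ℂ, lam ≠ 0 ∧ (A.map (fun n : ℤ => (n : ℂ))).charpoly.IsRoot lam ∧
        IsIntegral ℤ lam ∧ IsIntegral ℤ lam⁻¹ := by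
  calc closure (preTorsion (torusEndoHom A) : Set (UnitAddTorus (Fin d))) ≠ Set.univ
    _ ↔ ∃ k ≠ 0, ∀ x ∈ preTorsion (torusEndoHom A), torusCharacter k x = 0 := by
      rw [ne_eq, ← dense_iff_closure_eq, dense_iff_forall_torusCharacter]
      push Not
      simp only [and_comm]
    _ ↔ ∃ k ≠ 0, k ∈ ⨅ n : ℕ, (Aᵀ.toLin' ^ n).range := by
      simp only [forall_mem_preTorsion_torusCharacter_eq_zero_iff]
    _ ↔ ∃ lam : ℂ, lam ≠ 0 ∧ (A.map (algebraMap ℤ ℂ)).charpoly.IsRoot lam ∧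
        IsIntegral ℤ lam⁻¹ := by
      rw [exists_ne_zero_mem_iInf_range_pow_iff (K := ℂ)]
      simp only [Matrix.transpose_map, Matrix.charpoly_transpose]
    _ ↔ _ := exists_congr fun lam => and_congr_right fun _ => and_congr_right fun hlam =>
      (and_iff_right (isIntegral_of_isRoot_charpoly_map hlam)).symm

/-- For an invertible integer matrix `A`, the closure of the set of
points of `𝕋^d` annihilated by some power of `T_A` is a proper subset of `𝕋^d`
iff `A` has an eigenvalue `λ` which is an integral algebraic unit (both `λ` and
`1/λ` are algebraic integers). -/
theorem closure_preTorsion_ne_univ_iff {d : ℕ} (A : Matrix (Fin d) (Fin d) ℤ)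
    (hA : A.det ≠ 0) :
    closure {x : Fin d → AddCircle (1 : ℝ) | ∃ n : ℕ, (torusEndo A)^[n] x = 0}
        ≠ Set.univ ↔
      ∃ lam : ℂ, (Matrix.charpoly (A.map (fun n : ℤ => (n : ℂ)))).IsRoot lam ∧
        IsIntegral ℤ lam ∧ IsIntegral ℤ lam⁻¹ := by
  refine (closure_preTorsion_ne_univ_iff_general A).trans (exists_congr fun lam => ?_)
  exact and_iff_right_of_imp fun h => ne_zero_of_isRoot_charpoly_map hA h.1
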